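/- arXiv:1101.1033 — 11 statements merged into one kernel-verified Lean document; each statement's English description precedes it below -/
import Mathlib

section
/- Let R be a reduced commutative Noetherian ring of prime characteristic p, let e ≥ 1, and let φ : R → R be a p^{-e}-linear map. Let 𝔠_R = {r ∈ R : r·s ∈ R for every s ∈ R^N} be the conductor of R in its normalization R^N, regarded as an ideal of R. Then φ(𝔠_R) ⊆ 𝔠_R; that is, the conductor is compatible with every p^{-e}-linear map on R. -/
/-!
Write `q = p ^ e`. If `s` lies in the normalization, so does `s ^ q`, hence `c * s ^ q = d` for some
`d : R`. Writing `s = a / b` with `b` a nonzerodivisor, this reads `b ^ q * d = a ^ q * c` in `R`;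
applying `φ` gives `b * φ d = a * φ c`, that is, `φ c * s = φ d ∈ R`. (In other words, the extension
of `φ` to the total ring of fractions sends `c * s ^ q` to `φ c * s`.)
-/


/-- The conductor of a reduced Noetherian ring `R` (of prime characteristic `p`) in its
normalization (the integral closure of `R` in its total ring of fractions
`K(R) = FractionRing R`) is compatible with every `p^{-e}`-linear map `φ : R → R`. -/
theorem conductor_compatible_with_pe_linear_maps
    {R : Type*} [CommRing R] [IsReduced R] [IsNoetherianRing R]
    (p : ℕ) (hp : p.Prime) [CharP R p]
    (e : ℕ) (he : 1 ≤ e)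
    (φ : R → R)
    (hadd : ∀ x y : R, φ (x + y) = φ x + φ y)
    (hlin : ∀ r x : R, φ (r ^ p ^ e * x) = r * φ x)
    (c : R)
    (hc : ∀ s ∈ integralClosure R (FractionRing R),
      algebraMap R (FractionRing R) c * s ∈ (algebraMap R (FractionRing R)).range) :
    ∀ s ∈ integralClosure R (FractionRing R),
      algebraMap R (FractionRing R) (φ c) * s ∈ (algebraMap R (FractionRing R)).range := by
  intro s hs
  obtain ⟨d, hd⟩ := hc (s ^ p ^ e) (pow_mem hs _)
  obtain ⟨⟨a, b⟩, hab⟩ := IsLocalization.surj (nonZeroDivisors R) s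
  have hinj := IsFractionRing.injective R (FractionRing R)
  -- Clearing denominators in `c * s ^ q = d` gives an equation in `R`, to which `φ` applies.
  have h1 : (b : R) ^ p ^ e * d = a ^ p ^ e * c := by
    apply hinj
    simp only [map_mul, map_pow]
    rw [hd, ← hab]
    ring
  have h2 : (b : R) * φ d = a * φ c := by
    rw [← hlin, ← hlin, h1]
  refine ⟨φ d, ?_⟩
  apply (IsLocalization.map_units (FractionRing R) b).mul_left_cancel
  rw [← map_mul, h2, map_mul, ← hab]
  ring
end

section
/- Let R be a reduced commutative Noetherian ring of prime characteristic p, let e ≥ 1, and let φ : R → R be a p^{-e}-linear map. Then there exists a unique additive map φ_K : K(R) → K(R) on the total ring of fractions K(R) such that φ_K(u^{p^e}·v) = u·φ_K(v) for all u, v ∈ K(R) and φ_K(ι(r)) = ι(φ(r)) for all r ∈ R, where ι : R → K(R) is the canonical map. (Explicitly, φ_K(a/b) = φ(a·b^{p^e−1})/b for a ∈ R and b a nonzerodivisor of R.) -/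
/-!
Write `q = p ^ e` and let `ι : R → K(R)` be the canonical map. Every `u ∈ K(R)` admits a
nonzerodivisor `s` and `x ∈ R` with `s ^ q * u = ι x`: if `u = a / s`, take `x = a * s ^ (q - 1)`.
Any extension `φK` must then satisfy `s * φK u = φK (s ^ q * u) = ι (φ x)`, which gives uniqueness
because `ι s` is a unit. Conversely the quotient `ι (φ x) / ι s` depends only on `u`: if also
`t ^ q * u = ι y`, then `s ^ q * y = t ^ q * x` (as `ι` is injective), and applying `φ` yields
`s * φ y = t * φ x`. Hence a map `φK` with `s * φK u = ι (φ x)` for all such `s`, `x` exists, and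
the required identities follow from those of `φ` by clearing denominators.
-/

/-- Every fraction is carried into the image of `R` by the `q`-th power of a nonzerodivisor. -/
lemma exists_pow_mul_eq_algebraMap {R : Type*} [CommRing R] {q : ℕ} (hq : q ≠ 0)
    (u : FractionRing R) :
    ∃ s ∈ nonZeroDivisors R, ∃ x : R,
      algebraMap R (FractionRing R) s ^ q * u = algebraMap R (FractionRing R) x := by
  obtain ⟨⟨a, s⟩, h⟩ := IsLocalization.surj (nonZeroDivisors R) u
  refine ⟨s, s.2, a * (s : R) ^ (q - 1), ?_⟩
  obtain ⟨n, rfl⟩ := Nat.exists_eq_succ_of_ne_zero hq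
  simp only [Nat.succ_eq_add_one, Nat.add_sub_cancel, map_mul, map_pow] at h ⊢
  rw [← h]
  ring

/-- The extension exists as a function pinned down by the clearing of denominators: this is where
independence of the chosen representative is used. -/
lemma exists_extension_clearing_denominators {R : Type*} [CommRing R] {q : ℕ} (hq : q ≠ 0)
    (φ : R → R) (hlin : ∀ r x : R, φ (r ^ q * x) = r * φ x) :
    ∃ φK : FractionRing R → FractionRing R, ∀ u : FractionRing R, ∀ s ∈ nonZeroDivisors R,
      ∀ x : R, algebraMap R (FractionRing R) s ^ q * u = algebraMap R (FractionRing R) x →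
        algebraMap R (FractionRing R) s * φK u = algebraMap R (FractionRing R) (φ x) := by
  choose d hd n hn using exists_pow_mul_eq_algebraMap (R := R) hq
  refine ⟨fun u => IsLocalization.mk' _ (φ (n u)) ⟨d u, hd u⟩, fun u s _ x h => ?_⟩
  have hxy : s ^ q * n u = d u ^ q * x := by
    apply IsFractionRing.injective R (FractionRing R)
    simp only [map_mul, map_pow]
    rw [← h, ← hn u]
    ring
  have hφ : s * φ (n u) = d u * φ x := by rw [← hlin, ← hlin, hxy]
  rw [← IsLocalization.mk'_one (M := nonZeroDivisors R) (FractionRing R) (φ x),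
    ← IsLocalization.mk'_one (M := nonZeroDivisors R) (FractionRing R) s, ← IsLocalization.mk'_mul,
    IsLocalization.mk'_eq_iff_eq]
  simp [hφ]

/-- A `p^{-e}`-linear map `φ` on a reduced Noetherian ring `R` of prime characteristic `p`
extends uniquely to a `p^{-e}`-linear map on the total ring of fractions `K(R)`. -/
theorem pe_linear_extends_uniquely_to_total_ring_of_fractions
    {R : Type*} [CommRing R] [IsReduced R] [IsNoetherianRing R]
    (p : ℕ) (hp : p.Prime) [CharP R p]
    (e : ℕ) (he : 1 ≤ e)
    (φ : R → R)
    (hadd : ∀ x y : R, φ (x + y) = φ x + φ y)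
    (hlin : ∀ r x : R, φ (r ^ p ^ e * x) = r * φ x) :
    ∃! φK : FractionRing R → FractionRing R,
      (∀ u v : FractionRing R, φK (u + v) = φK u + φK v) ∧
      (∀ u v : FractionRing R, φK (u ^ p ^ e * v) = u * φK v) ∧
      (∀ r : R, φK (algebraMap R (FractionRing R) r) = algebraMap R (FractionRing R) (φ r)) := by
  have hq : p ^ e ≠ 0 := pow_ne_zero _ hp.ne_zero
  have hu : ∀ s ∈ nonZeroDivisors R, IsUnit (algebraMap R (FractionRing R) s) :=
    fun s hs => IsLocalization.map_units (FractionRing R) (⟨s, hs⟩ : nonZeroDivisors R)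
  obtain ⟨φK, hK⟩ := exists_extension_clearing_denominators hq φ hlin
  refine ⟨φK, ⟨fun u v => ?_, fun u v => ?_, fun r => ?_⟩, ?_⟩
  · obtain ⟨s, hs, x, hx⟩ := exists_pow_mul_eq_algebraMap hq u
    obtain ⟨t, ht, y, hy⟩ := exists_pow_mul_eq_algebraMap hq v
    have h := hK (u + v) (s * t) (mul_mem hs ht) (t ^ p ^ e * x + s ^ p ^ e * y) (by
      simp only [map_add, map_mul, map_pow]
      rw [← hx, ← hy]
      ring)
    apply (hu _ (mul_mem hs ht)).mul_left_cancel
    rw [h, hadd, hlin, hlin]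
    simp only [map_add, map_mul]
    rw [← hK u s hs x hx, ← hK v t ht y hy]
    ring
  · obtain ⟨⟨a, d⟩, ha⟩ := IsLocalization.surj (nonZeroDivisors R) u
    obtain ⟨s, hs, x, hx⟩ := exists_pow_mul_eq_algebraMap hq v
    have h := hK (u ^ p ^ e * v) (d * s) (mul_mem d.2 hs) (a ^ p ^ e * x) (by
      simp only [map_mul, map_pow] at ha ⊢
      rw [← hx, ← ha]
      ring)
    apply (hu _ (mul_mem d.2 hs)).mul_left_cancel
    rw [h, hlin]
    simp only [map_mul] at ha ⊢
    rw [← hK v s hs x hx, ← ha]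
    ring
  · simpa using hK (algebraMap R _ r) 1 (one_mem _) r (by simp)
  · rintro ψ ⟨-, hψ, hι⟩
    funext u
    obtain ⟨s, hs, x, hx⟩ := exists_pow_mul_eq_algebraMap hq u
    apply (hu s hs).mul_left_cancel
    rw [hK u s hs x hx, ← hψ, hx, hι]
end

section
/- Let R be a reduced commutative Noetherian ring of prime characteristic p, let e ≥ 1, and let φ : R → R be a p^{-e}-linear map. Then φ extends to a p^{-e}-linear map on the normalization: there exists an additive map φ̄ : R^N → R^N such that φ̄(s^{p^e}·t) = s·φ̄(t) for all s, t ∈ R^N and φ̄(r) = φ(r) for all r in (the image of) R. -/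
/-!
Write `q = p ^ e` and let `K` be the total ring of fractions of `R`. The map `φ` extends to a
`q⁻¹`-linear map `ψ` on `K` by `ψ (a / s ^ q) = φ a / s` (`exists_extension_fractionRing`), and the
point is that `ψ` preserves integrality over `R` (`isIntegral_extension`).

For `x` integral over `R`, consider the conductor `I = {c ∈ K | c * x ^ n ∈ R for all n}` of
`R[x]`. It is contained in `R`, and it contains a nonzerodivisor `d` because `x` is integral.
Moreover `ψ x * I ⊆ I`: for `c ∈ I`,
`(ψ x * c) * x ^ n = ψ (c ^ q * x ^ (q * n + 1)) = ψ (c ^ (q - 1) * (c * x ^ (q * n + 1)))`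
lies in `ψ R = φ R ⊆ R`. Hence `d * (ψ x) ^ n ∈ I ⊆ R` for all `n`, so `ψ x` is almost integral
over `R`, and therefore integral since `R` is Noetherian. No finiteness of the normalization over
`R` is needed.
-/

open scoped nonZeroDivisors

/-- A `q⁻¹`-linear map on `R` extends to a `q⁻¹`-linear map on the total ring of fractions. -/
lemma exists_extension_fractionRing {R : Type*} [CommRing R] (q : ℕ) (hq : 0 < q) (φ : R → R)
    (hadd : ∀ x y : R, φ (x + y) = φ x + φ y)
    (hlin : ∀ r x : R, φ (r ^ q * x) = r * φ x) :
    ∃ ψ : FractionRing R → FractionRing R,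
      (∀ s t, ψ (s + t) = ψ s + ψ t) ∧
      (∀ s t, ψ (s ^ q * t) = s * ψ t) ∧
      (∀ r : R, ψ (algebraMap R _ r) = algebraMap R _ (φ r)) := by
  set K := FractionRing R
  have hinj : Function.Injective (algebraMap R K) := IsFractionRing.injective R K
  have hunit : ∀ s ∈ R⁰, IsUnit (algebraMap R K s) := fun s hs =>
    IsLocalization.map_units K (⟨s, hs⟩ : R⁰)
  have hfrac : ∀ z : K, ∃ s ∈ R⁰, ∃ a : R, algebraMap R K s * z = algebraMap R K a := by
    intro z
    obtain ⟨⟨a, s⟩, h⟩ := IsLocalization.surj R⁰ z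
    exact ⟨s, s.2, a, by rw [mul_comm]; exact h⟩
  have hpow : ∀ z : K, ∃ s ∈ R⁰, ∃ a : R, algebraMap R K s ^ q * z = algebraMap R K a := by
    intro z
    obtain ⟨s, hs, a, h⟩ := hfrac z
    refine ⟨s, hs, s ^ (q - 1) * a, ?_⟩
    rw [map_mul, map_pow, ← h, ← mul_assoc, ← pow_succ, Nat.sub_add_cancel hq]
  -- The value `w = ψ z` is determined by `s * w = φ a` for every presentation `s ^ q * z = a`.
  have hex : ∀ z : K, ∃ w : K, ∀ s ∈ R⁰, ∀ a : R,
      algebraMap R K s ^ q * z = algebraMap R K a →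
        algebraMap R K s * w = algebraMap R K (φ a) := by
    intro z
    obtain ⟨s, hs, a, h⟩ := hpow z
    obtain ⟨w, hw⟩ := (hunit s hs).dvd (a := algebraMap R K (φ a))
    refine ⟨w, fun t ht b hb => ?_⟩
    have hab : t ^ q * a = s ^ q * b := hinj (by
      simp only [map_mul, map_pow, ← h, ← hb]
      ring)
    have hφ := congrArg (fun x => algebraMap R K (φ x)) hab
    simp only [hlin, map_mul] at hφ
    refine (hunit s hs).mul_left_cancel ?_
    rw [← hφ, hw]
    ring
  choose ψ hψ using hex
  refine ⟨ψ, fun z w => ?_, fun z w => ?_, fun r => ?_⟩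
  · obtain ⟨s, hs, a, h⟩ := hpow z
    obtain ⟨t, ht, b, h'⟩ := hpow w
    have hst := mul_mem hs ht
    refine (hunit _ hst).mul_left_cancel ?_
    rw [hψ (z + w) (s * t) hst (t ^ q * a + s ^ q * b) (by
      simp only [map_add, map_mul, map_pow, ← h, ← h']; ring)]
    simp only [hadd, hlin, map_add, map_mul, ← hψ z s hs a h, ← hψ w t ht b h']
    ring
  · obtain ⟨s, hs, a, h⟩ := hfrac z
    obtain ⟨t, ht, b, h'⟩ := hpow w
    have hst := mul_mem hs ht
    refine (hunit _ hst).mul_left_cancel ?_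
    rw [hψ (z ^ q * w) (s * t) hst (a ^ q * b) (by
      simp only [map_mul, map_pow, ← h, ← h']; ring)]
    simp only [hlin, map_mul, ← h, ← hψ w t ht b h']
    ring
  · simpa using hψ (algebraMap R K r) 1 (one_mem _) r (by simp)

/-- The `q⁻¹`-linear extension of `φ` to the total ring of fractions preserves integrality over
`R`, because multiplication by `ψ x` preserves the conductor of `R[x]`. -/
lemma isIntegral_extension {R : Type*} [CommRing R] [IsNoetherianRing R] (q : ℕ) (hq : 0 < q)
    (φ : R → R) (ψ : FractionRing R → FractionRing R)
    (hlin : ∀ s t, ψ (s ^ q * t) = s * ψ t)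
    (hext : ∀ r : R, ψ (algebraMap R _ r) = algebraMap R _ (φ r))
    {x : FractionRing R} (hx : IsIntegral R x) : IsIntegral R (ψ x) := by
  obtain ⟨d, hd, hdx⟩ := hx.isAlmostIntegral
  have key : ∀ c : FractionRing R, (∀ n : ℕ, c * x ^ n ∈ (algebraMap R (FractionRing R)).range) →
      ∀ n : ℕ, (c * ψ x) * x ^ n ∈ (algebraMap R (FractionRing R)).range := by
    intro c hc n
    have h0 : c ∈ (algebraMap R (FractionRing R)).range := by simpa using hc 0
    have hmem : (c * x ^ n) ^ q * x ∈ (algebraMap R (FractionRing R)).range := by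
      have : (c * x ^ n) ^ q * x = c ^ (q - 1) * (c * x ^ (n * q + 1)) := by
        obtain ⟨m, rfl⟩ : ∃ m, q = m + 1 := ⟨q - 1, by omega⟩
        rw [Nat.add_sub_cancel]
        ring
      rw [this]
      exact mul_mem (pow_mem h0 _) (hc _)
    obtain ⟨r, hr⟩ := hmem
    refine ⟨φ r, ?_⟩
    rw [← hext, hr, hlin]
    ring
  have hall : ∀ m n : ℕ,
      (algebraMap R (FractionRing R) d * ψ x ^ m) * x ^ n ∈ (algebraMap R (FractionRing R)).range := by
    intro m
    induction m with
    | zero => simpa [Algebra.smul_def] using hdx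
    | succ m ih =>
      intro n
      rw [pow_succ, ← mul_assoc]
      exact key _ ih n
  have hal : IsAlmostIntegral R (ψ x) :=
    ⟨d, hd, fun n => by simpa [Algebra.smul_def] using hall n 0⟩
  exact hal.isIntegral_of_nonZeroDivisors_le_comap fun s hs =>
    (IsLocalization.map_units (FractionRing R) (⟨s, hs⟩ : R⁰)).mem_nonZeroDivisors

/-- A `p^{-e}`-linear map `φ` on a reduced Noetherian ring `R` of prime characteristic `p`
extends to a `p^{-e}`-linear map on the normalization `R^N`, i.e. the integral closure of `R`
in its total ring of fractions. -/
theorem pe_linear_extends_to_normalization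
    {R : Type*} [CommRing R] [IsReduced R] [IsNoetherianRing R]
    (p : ℕ) (hp : p.Prime) [CharP R p]
    (e : ℕ) (he : 1 ≤ e)
    (φ : R → R)
    (hadd : ∀ x y : R, φ (x + y) = φ x + φ y)
    (hlin : ∀ r x : R, φ (r ^ p ^ e * x) = r * φ x) :
    ∃ φbar : ↥(integralClosure R (FractionRing R)) → ↥(integralClosure R (FractionRing R)),
      (∀ s t : ↥(integralClosure R (FractionRing R)), φbar (s + t) = φbar s + φbar t) ∧
      (∀ s t : ↥(integralClosure R (FractionRing R)), φbar (s ^ p ^ e * t) = s * φbar t) ∧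
      (∀ r : R, φbar (algebraMap R ↥(integralClosure R (FractionRing R)) r)
        = algebraMap R ↥(integralClosure R (FractionRing R)) (φ r)) := by
  have hq : 0 < p ^ e := pow_pos hp.pos e
  obtain ⟨ψ, hψadd, hψlin, hψext⟩ := exists_extension_fractionRing (p ^ e) hq φ hadd hlin
  exact ⟨fun s => ⟨ψ s, isIntegral_extension (p ^ e) hq φ ψ hψlin hψext s.2⟩,
    fun s t => Subtype.ext (hψadd s t), fun s t => Subtype.ext (hψlin s t),
    fun r => Subtype.ext (hψext r)⟩
end

section
/- Let R be a reduced commutative Noetherian ring of prime characteristic p, let e ≥ 1, and let φ : R → R be a p^{-e}-linear map. If ψ₁, ψ₂ : R^N → R^N are two additive maps on the normalization satisfying ψᵢ(s^{p^e}·t) = s·ψᵢ(t) for all s, t ∈ R^N and ψᵢ(r) = φ(r) for all r in (the image of) R, then ψ₁ = ψ₂; that is, the p^{-e}-linear extension of φ to R^N is unique. -/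
/-! An element `s` of `R^N` has the form `a / b` with `a, b ∈ R` and `b` a nonzerodivisor, so
`b ^ p ^ e * s = b ^ (p ^ e - 1) * a` lies in `R`. Hence any extension `ψ` of `φ` satisfies
`b * ψ s = ψ (b ^ p ^ e * s) = φ (b ^ (p ^ e - 1) * a)`, and `b` can be cancelled since it becomes
a unit in the total ring of fractions, which contains `R^N`. -/


/-- The `p^{-e}`-linear extension of a `p^{-e}`-linear map `φ : R → R` to the normalization
`R^N` (the integral closure of `R` in its total ring of fractions) is unique. -/
theorem pe_linear_extension_to_normalization_unique
    {R : Type*} [CommRing R] [IsReduced R] [IsNoetherianRing R]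
    (p : ℕ) (hp : p.Prime) [CharP R p]
    (e : ℕ) (he : 1 ≤ e)
    (φ : R → R)
    (hadd : ∀ x y : R, φ (x + y) = φ x + φ y)
    (hlin : ∀ r x : R, φ (r ^ p ^ e * x) = r * φ x)
    (ψ₁ ψ₂ : ↥(integralClosure R (FractionRing R)) → ↥(integralClosure R (FractionRing R)))
    (hψ₁add : ∀ s t, ψ₁ (s + t) = ψ₁ s + ψ₁ t)
    (hψ₁lin : ∀ s t, ψ₁ (s ^ p ^ e * t) = s * ψ₁ t)
    (hψ₁ext : ∀ r : R, ψ₁ (algebraMap R ↥(integralClosure R (FractionRing R)) r)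
      = algebraMap R ↥(integralClosure R (FractionRing R)) (φ r))
    (hψ₂add : ∀ s t, ψ₂ (s + t) = ψ₂ s + ψ₂ t)
    (hψ₂lin : ∀ s t, ψ₂ (s ^ p ^ e * t) = s * ψ₂ t)
    (hψ₂ext : ∀ r : R, ψ₂ (algebraMap R ↥(integralClosure R (FractionRing R)) r)
      = algebraMap R ↥(integralClosure R (FractionRing R)) (φ r)) :
    ψ₁ = ψ₂ := by
  funext s
  obtain ⟨⟨a, b⟩, hab⟩ := IsLocalization.surj (nonZeroDivisors R) (s : FractionRing R)
  have hs : algebraMap R ↥(integralClosure R (FractionRing R)) b ^ p ^ e * s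
      = algebraMap R _ ((b : R) ^ (p ^ e - 1) * a) := by
    apply Subtype.ext
    change algebraMap R (FractionRing R) b ^ p ^ e * (s : FractionRing R)
      = algebraMap R (FractionRing R) ((b : R) ^ (p ^ e - 1) * a)
    have hq : p ^ e ≠ 0 := pow_ne_zero _ hp.ne_zero
    rw [map_mul, map_pow, ← hab, ← pow_sub_one_mul hq]
    ring
  have h : algebraMap R ↥(integralClosure R (FractionRing R)) b * ψ₁ s
      = algebraMap R _ b * ψ₂ s := by
    rw [← hψ₁lin, ← hψ₂lin, hs, hψ₁ext, hψ₂ext]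
  apply Subtype.ext
  exact (IsLocalization.map_units (FractionRing R) b).mul_left_cancel (congrArg Subtype.val h)
end

section
/- Let R be a reduced commutative Noetherian ring of prime characteristic p, let e ≥ 1, and let φ : R → R be a surjective p^{-e}-linear map. Then any additive map φ̄ : R^N → R^N satisfying φ̄(s^{p^e}·t) = s·φ̄(t) for all s, t ∈ R^N and extending φ (i.e., φ̄(r) = φ(r) for all r in the image of R) is surjective. In particular, if Spec R is Frobenius split then so is Spec R^N. -/
/-!
If `φ x = 1` for a `q`-th root linear map (`q = p ^ e`), then any extension `φbar` satisfies
`φbar (s ^ q * x) = s * φbar x = s`, so it is surjective.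

For Frobenius splittings, what remains is that a `p⁻¹`-linear map `σ` on `R` extends to the
normalization. It extends to the total ring of fractions `K` by the formula
`σ (x / s) = σ (s ^ (p - 1) * x) / s`; write `f` for this extension. To see that `f` preserves
integrality over `R`, let `t : K` be integral and let `C` be the conductor of `R` in `R[t]`, i.e. the
ideal of all `a : R` with `a * t ^ n ∈ R` for every `n`. It contains a nonzerodivisor. For `a ∈ C`,
the product `b = a * f t = f (a ^ p * t)` lies in `R`, and
`b * t ^ n = f (a ^ p * t ^ (n * p + 1)) ∈ f R ⊆ R`, so `b ∈ C`. Thus `C * f t ⊆ C`, whence `f t` is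
almost integral, and therefore integral because `R` is Noetherian. Working with `R[t]` instead of the
whole normalization avoids any finiteness assumption on the latter.
-/

open scoped nonZeroDivisors

/-- A surjective `q`-th root linear map takes the value `1`, and this forces every multiplicatively
compatible extension of it to be surjective. -/
lemma surjective_of_root_linear_extension {R S : Type*} [CommRing R] [CommRing S] [Algebra R S]
    {q : ℕ} {φ : R → R} (hsurj : Function.Surjective φ) {ψ : S → S}
    (hlin : ∀ s t, ψ (s ^ q * t) = s * ψ t)
    (hext : ∀ r, ψ (algebraMap R S r) = algebraMap R S (φ r)) :
    Function.Surjective ψ := by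
  intro s
  obtain ⟨x, hx⟩ := hsurj 1
  exact ⟨s ^ q * algebraMap R S x, by rw [hlin, hext, hx, map_one, mul_one]⟩

/-- A `q`-th root linear map on `R` extends to the total ring of fractions. The property recorded
here determines the extension `f`, and the additivity and linearity of `f` follow from it. -/
lemma exists_root_linear_extension_fractionRing {R K : Type*} [CommRing R] [CommRing K]
    [Algebra R K] [IsFractionRing R K] {q : ℕ} (hq : 0 < q) (σ : R → R)
    (hlin : ∀ r x, σ (r ^ q * x) = r * σ x) :
    ∃ f : K → K, ∀ (s r : R) (k : K), algebraMap R K s ^ q * k = algebraMap R K r →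
      algebraMap R K s * f k = algebraMap R K (σ r) := by
  have hmk (k : K) : ∃ (x : R) (s : R⁰), IsLocalization.mk' K x s = k :=
    IsLocalization.exists_mk'_eq R⁰ k
  choose x s hxs using hmk
  refine ⟨fun k ↦ IsLocalization.mk' K (σ ((s k : R) ^ (q - 1) * x k)) (s k), fun a r k h ↦ ?_⟩
  have hk : k * algebraMap R K (s k) = algebraMap R K (x k) := by
    exact IsLocalization.eq_mk'_iff_mul_eq.mp (hxs k).symm
  have hR : a ^ q * x k = r * (s k : R) := by
    apply IsFractionRing.injective R K
    simp only [map_mul, map_pow]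
    rw [← h, ← hk]
    ring
  have hpow : (s k : R) ^ q = (s k : R) ^ (q - 1) * s k := by
    rw [← pow_succ, Nat.sub_add_cancel hq]
  have key : a * σ ((s k : R) ^ (q - 1) * x k) = s k * σ r := by
    rw [← hlin, ← hlin]
    congr 1
    rw [hpow]
    linear_combination (s k : R) ^ (q - 1) * hR
  apply (IsLocalization.map_units K (s k)).mul_left_cancel
  rw [mul_left_comm, IsLocalization.mk'_spec', ← map_mul, key, map_mul]

/-- A `q`-th root linear map on a Noetherian ring extends to its normalization. -/
lemma exists_root_linear_extension_integralClosure {R K : Type*} [CommRing R] [IsNoetherianRing R]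
    [CommRing K] [Algebra R K] [IsFractionRing R K] {q : ℕ} (hq : 0 < q) (σ : R → R)
    (hadd : ∀ x y, σ (x + y) = σ x + σ y) (hlin : ∀ r x, σ (r ^ q * x) = r * σ x) :
    ∃ τ : integralClosure R K → integralClosure R K,
      (∀ s t, τ (s + t) = τ s + τ t) ∧ (∀ s t, τ (s ^ q * t) = s * τ t) ∧
      ∀ r, τ (algebraMap R (integralClosure R K) r) =
        algebraMap R (integralClosure R K) (σ r) := by
  obtain ⟨f, hf⟩ := exists_root_linear_extension_fractionRing (K := K) hq σ hlin
  have hqs : q = q - 1 + 1 := (Nat.sub_add_cancel hq).symm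
  have hext (r : R) : f (algebraMap R K r) = algebraMap R K (σ r) := by
    simpa using hf 1 r (algebraMap R K r) (by simp)
  -- Two elements of `K` have a common denominator `d`, and then `d ^ q` also clears it.
  have hden (k l : K) : ∃ d ∈ R⁰, ∃ u v : R,
      algebraMap R K d * k = algebraMap R K u ∧ algebraMap R K d * l = algebraMap R K v := by
    obtain ⟨u, v, d, hu, hv⟩ := IsLocalization.surj₂ R⁰ K k l
    exact ⟨d, d.2, u, v, by rw [mul_comm, hu], by rw [mul_comm, hv]⟩
  have hclear {d u : R} {k : K} (h : algebraMap R K d * k = algebraMap R K u) :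
      algebraMap R K d ^ q * k = algebraMap R K (d ^ (q - 1) * u) := by
    rw [map_mul, map_pow, ← h, ← mul_assoc, ← pow_succ, ← hqs]
  have hunit {d : R} (hd : d ∈ R⁰) : IsUnit (algebraMap R K d) :=
    IsLocalization.map_units K (⟨d, hd⟩ : R⁰)
  have hfadd (k l : K) : f (k + l) = f k + f l := by
    obtain ⟨d, hd, u, v, hu, hv⟩ := hden k l
    apply (hunit hd).mul_left_cancel
    rw [hf d _ (k + l) (by rw [mul_add, hclear hu, hclear hv, ← map_add]), hadd, map_add, mul_add,
      hf d _ k (hclear hu), hf d _ l (hclear hv)]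
  have hflin (k l : K) : f (k ^ q * l) = k * f l := by
    obtain ⟨d, hd, u, v, hu, hv⟩ := hden k l
    apply ((hunit hd).mul (hunit hd)).mul_left_cancel
    have h : algebraMap R K (d * d) ^ q * (k ^ q * l) =
        algebraMap R K (u ^ q * (d ^ (q - 1) * v)) := by
      rw [map_mul _ (u ^ q), ← hclear hv, map_pow, ← hu, map_mul]
      ring
    rw [← map_mul, hf _ _ _ h, hlin, map_mul, ← hu, ← hf d _ l (hclear hv), map_mul]
    ring
  have hint (t : K) (ht : IsIntegral R t) : IsIntegral R (f t) := by
    obtain ⟨c, hc, hct⟩ := ht.isAlmostIntegral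
    -- The conductor of `R` in `R[t]` is stable under multiplication by `f t`.
    have hstep (a : R) (ha : ∀ n : ℕ, a • t ^ n ∈ (algebraMap R K).range) :
        ∃ b : R, algebraMap R K b = a • f t ∧
          ∀ n : ℕ, b • t ^ n ∈ (algebraMap R K).range := by
      have hmem (n : ℕ) : ∃ r : R, algebraMap R K r = algebraMap R K a ^ q * t ^ n := by
        obtain ⟨r, hr⟩ := ha n
        refine ⟨a ^ (q - 1) * r, ?_⟩
        rw [← hclear (by rw [hr, Algebra.smul_def])]
      have hshift (n : ℕ) : ∃ r : R, algebraMap R K r = algebraMap R K a * f t * t ^ n := by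
        obtain ⟨r, hr⟩ := hmem (n * q + 1)
        refine ⟨σ r, ?_⟩
        rw [← hext, hr, show algebraMap R K a ^ q * t ^ (n * q + 1) =
          (algebraMap R K a * t ^ n) ^ q * t by ring, hflin]
        ring
      obtain ⟨b, hb⟩ := hshift 0
      rw [pow_zero, mul_one] at hb
      refine ⟨b, by rw [hb, Algebra.smul_def], fun n ↦ ?_⟩
      obtain ⟨r, hr⟩ := hshift n
      exact ⟨r, by rw [hr, Algebra.smul_def, hb]⟩
    have hpow (n : ℕ) : ∃ b : R, algebraMap R K b = c • f t ^ n ∧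
        ∀ m : ℕ, b • t ^ m ∈ (algebraMap R K).range := by
      induction n with
      | zero => exact ⟨c, by simp [Algebra.smul_def], hct⟩
      | succ n ih =>
        obtain ⟨b, hb, hbt⟩ := ih
        obtain ⟨b', hb', hbt'⟩ := hstep b hbt
        refine ⟨b', ?_, hbt'⟩
        rw [hb', Algebra.smul_def, hb, pow_succ, smul_mul_assoc]
    have hai : IsAlmostIntegral R (f t) := ⟨c, hc, fun n ↦ by
      obtain ⟨b, hb, -⟩ := hpow n
      exact ⟨b, hb⟩⟩
    exact hai.isIntegral_of_nonZeroDivisors_le_comap fun d hd ↦ (hunit hd).mem_nonZeroDivisors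
  exact ⟨fun t ↦ ⟨f t, hint t t.2⟩, fun s t ↦ Subtype.ext (hfadd s t),
    fun s t ↦ Subtype.ext (hflin s t), fun r ↦ Subtype.ext (hext r)⟩

/-- If `φ : R → R` is a surjective `p^{-e}`-linear map on a reduced Noetherian ring of prime
characteristic `p`, then any `p^{-e}`-linear extension `φ̄` of `φ` to the normalization `R^N`
is surjective.  In particular, if `Spec R` is Frobenius split then so is `Spec R^N`. -/
theorem surjective_pe_linear_extension_of_surjective
    {R : Type*} [CommRing R] [IsReduced R] [IsNoetherianRing R]
    (p : ℕ) (hp : p.Prime) [CharP R p]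
    (e : ℕ) (he : 1 ≤ e)
    (φ : R → R)
    (hadd : ∀ x y : R, φ (x + y) = φ x + φ y)
    (hlin : ∀ r x : R, φ (r ^ p ^ e * x) = r * φ x)
    (hsurj : Function.Surjective φ)
    (φbar : ↥(integralClosure R (FractionRing R)) → ↥(integralClosure R (FractionRing R)))
    (hbaradd : ∀ s t, φbar (s + t) = φbar s + φbar t)
    (hbarlin : ∀ s t, φbar (s ^ p ^ e * t) = s * φbar t)
    (hbarext : ∀ r : R, φbar (algebraMap R ↥(integralClosure R (FractionRing R)) r)
      = algebraMap R ↥(integralClosure R (FractionRing R)) (φ r)) :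
    Function.Surjective φbar ∧
    ((∃ σ : R → R, (∀ x y : R, σ (x + y) = σ x + σ y) ∧
        (∀ r x : R, σ (r ^ p * x) = r * σ x) ∧ Function.Surjective σ) →
      (∃ τ : ↥(integralClosure R (FractionRing R)) → ↥(integralClosure R (FractionRing R)),
        (∀ s t, τ (s + t) = τ s + τ t) ∧
        (∀ s t, τ (s ^ p * t) = s * τ t) ∧ Function.Surjective τ)) := by
  refine ⟨surjective_of_root_linear_extension hsurj hbarlin hbarext, ?_⟩
  rintro ⟨σ, hσadd, hσlin, hσsurj⟩
  obtain ⟨τ, hτadd, hτlin, hτext⟩ := exists_root_linear_extension_integralClosure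
    (K := FractionRing R) hp.pos σ hσadd hσlin
  exact ⟨τ, hτadd, hτlin, surjective_of_root_linear_extension hσsurj hτlin hτext⟩
end

section
/- Let (R, 𝔪) be a local commutative ring of prime characteristic p, let I ⊊ R be a proper ideal, let e ≥ 1, and let β : R → R be a p^{-e}-linear map with β(I) ⊆ I. If the induced map β̃ : R/I → R/I (defined by β̃(x mod I) = β(x) mod I, which is additive and satisfies β̃(r̄^{p^e}·x̄) = r̄·β̃(x̄)) is surjective, then β itself is surjective. -/
/-- (cf. [Schwede, F-adjunction, Observation 5.1])  Let `(R, 𝔪)` be a local ring of prime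
characteristic `p`, `I ⊊ R` a proper ideal and `β : R → R` a `p^{-e}`-linear map with
`β(I) ⊆ I`.  If the induced map on `R/I` is surjective then `β` is surjective. -/
theorem surjective_of_surjective_mod_ideal
    {R : Type*} [CommRing R] [IsLocalRing R]
    (p : ℕ) (hp : p.Prime) [CharP R p]
    (e : ℕ) (he : 1 ≤ e)
    (I : Ideal R) (hI : I ≠ ⊤)
    (β : R → R)
    (hadd : ∀ x y : R, β (x + y) = β x + β y)
    (hlin : ∀ r x : R, β (r ^ p ^ e * x) = r * β x)
    (hcomp : ∀ x ∈ I, β x ∈ I)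
    (hsurj : ∀ x : R, ∃ y : R, Ideal.Quotient.mk I (β y) = Ideal.Quotient.mk I x) :
    Function.Surjective β := by
  -- Lift `1` along the induced map: `β y ≡ 1` modulo `I ⊆ 𝔪`, so `β y` is a unit of `R`.
  obtain ⟨y, hy⟩ := hsurj 1
  have hm : β y - 1 ∈ IsLocalRing.maximalIdeal R :=
    IsLocalRing.le_maximalIdeal hI (Ideal.Quotient.eq.mp hy)
  have hu : IsUnit (β y) := by
    by_contra h
    have h1 := Ideal.sub_mem _ ((IsLocalRing.mem_maximalIdeal _).mpr h) hm
    rw [sub_sub_cancel] at h1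
    exact (Ideal.ne_top_iff_one _).mp (IsLocalRing.maximalIdeal.isMaximal R).ne_top h1
  obtain ⟨v, hv⟩ := hu.exists_left_inv
  -- The image of `β` is closed under scaling by `R`, and it contains a unit.
  intro x
  exact ⟨(x * v) ^ p ^ e * y, by rw [hlin, mul_assoc, hv, mul_one]⟩
end

section
/- Let R be a commutative ring of prime characteristic p, let e ≥ 1, and let φ : R → R be a surjective p^{-e}-linear map. If I ⊆ R is an ideal with φ(I) ⊆ I (i.e., I is φ-compatible), then I is a radical ideal. -/
/-- If `φ : R → R` is a surjective `p^{-e}`-linear map on a ring of prime characteristic `p`,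
then every `φ`-compatible ideal `I` is radical. -/
theorem compatible_ideal_isRadical_of_surjective
    {R : Type*} [CommRing R]
    (p : ℕ) (hp : p.Prime) [CharP R p]
    (e : ℕ) (he : 1 ≤ e)
    (φ : R → R)
    (hadd : ∀ x y : R, φ (x + y) = φ x + φ y)
    (hlin : ∀ r x : R, φ (r ^ p ^ e * x) = r * φ x)
    (hsurj : Function.Surjective φ)
    (I : Ideal R)
    (hcomp : ∀ x ∈ I, φ x ∈ I) :
    ∀ x : R, ∀ n : ℕ, 1 ≤ n → x ^ n ∈ I → x ∈ I := by
  obtain ⟨c, hc⟩ := hsurj 1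
  -- `x = x * φ c = φ (x ^ q * c)` with `q = p ^ e`, so `I` is closed under extracting `q`-th roots.
  have root : ∀ x : R, x ^ p ^ e ∈ I → x ∈ I := fun x hx => by
    have h := hcomp _ (I.mul_mem_right c hx)
    rwa [hlin, hc, mul_one] at h
  have iter : ∀ k : ℕ, ∀ x : R, x ^ (p ^ e) ^ k ∈ I → x ∈ I := by
    intro k
    induction k with
    | zero => intro x hx; simpa using hx
    | succ k ih =>
      intro x hx
      rw [pow_succ, mul_comm, pow_mul] at hx
      exact root x (ih _ hx)
  intro x n _ hx
  have hq : 1 < p ^ e := Nat.one_lt_pow (by omega) hp.one_lt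
  exact iter n x (I.pow_mem_of_pow_mem hx (Nat.lt_pow_self hq).le)
end

section
/- Let R be a reduced commutative ring of prime characteristic p, let e ≥ 1, and let φ : R → R be a p^{-e}-linear map. Then every minimal prime ideal 𝔭 of R is φ-compatible: φ(𝔭) ⊆ 𝔭. -/
/-!
Over a reduced ring, every element `x` of a minimal prime `𝔭` is annihilated by some `s ∉ 𝔭`,
because the only prime of the localization at `𝔭` is its maximal ideal, so that `x` is nilpotent
there. Then `s * φ x = φ (s ^ p ^ e * x) = φ 0 = 0` lies in `𝔭`, and primality of `𝔭` gives
`φ x ∈ 𝔭`.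
-/

theorem exists_notMem_mul_eq_zero_of_mem_minimalPrimes {R : Type*} [CommRing R] [IsReduced R]
    {𝔭 : Ideal R} (h𝔭 : 𝔭 ∈ minimalPrimes R) {x : R} (hx : x ∈ 𝔭) :
    ∃ s ∉ 𝔭, s * x = 0 := by
  have : 𝔭.IsPrime := h𝔭.1.1
  obtain ⟨n, hn⟩ : IsNilpotent (algebraMap R (Localization.AtPrime 𝔭) x) := by
    rw [← mem_nilradical, nilradical, Ideal.radical_eq_sInf, Ideal.mem_sInf]
    rintro q ⟨-, hq⟩
    obtain ⟨h₁, h₂⟩ := ((IsLocalization.AtPrime.orderIsoOfPrime _ 𝔭) ⟨q, hq⟩).2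
    exact h𝔭.2 ⟨h₁, bot_le⟩ h₂ hx
  rw [← map_pow, IsLocalization.map_eq_zero_iff 𝔭.primeCompl] at hn
  obtain ⟨⟨s, hs⟩, hsx⟩ := hn
  -- Only a power of `x` is killed by `s` so far; reducedness removes the exponent.
  refine ⟨s, hs, IsReduced.eq_zero _ ⟨n + 1, ?_⟩⟩
  calc (s * x) ^ (n + 1) = s ^ n * x * (s * x ^ n) := by ring
    _ = 0 := by rw [hsx, mul_zero]

/-- Every minimal prime of a reduced ring of prime characteristic `p` is compatible with
every `p^{-e}`-linear map. -/
theorem minimal_prime_compatible_with_pe_linear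
    {R : Type*} [CommRing R] [IsReduced R]
    (p : ℕ) (hp : p.Prime) [CharP R p]
    (e : ℕ) (he : 1 ≤ e)
    (φ : R → R)
    (hadd : ∀ x y : R, φ (x + y) = φ x + φ y)
    (hlin : ∀ r x : R, φ (r ^ p ^ e * x) = r * φ x)
    (𝔭 : Ideal R) (h𝔭 : 𝔭 ∈ minimalPrimes R) :
    ∀ x ∈ 𝔭, φ x ∈ 𝔭 := by
  intro x hx
  obtain ⟨s, hs, hsx⟩ := exists_notMem_mul_eq_zero_of_mem_minimalPrimes h𝔭 hx
  have hφ0 : φ 0 = 0 := by simpa using hadd 0 0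
  have hpow : s ^ p ^ e * x = 0 := by
    obtain ⟨k, hk⟩ := Nat.exists_eq_succ_of_ne_zero (pow_ne_zero e hp.ne_zero)
    rw [hk, pow_succ, mul_assoc, hsx, mul_zero]
  have hmul : s * φ x = 0 := by rw [← hlin, hpow, hφ0]
  exact (h𝔭.1.1.mem_or_mem (hmul ▸ 𝔭.zero_mem)).resolve_left hs
end

section
/- Let S = 𝔽₃[X] be the polynomial ring over the field with three elements and let R ⊆ S be the 𝔽₃-subalgebra generated by X², so R = 𝔽₃[X²]. There exists an additive map φ : R → R satisfying φ(r³·a) = r·φ(a) for all r, a ∈ R such that there is NO additive map ψ : S → S satisfying ψ(f³·g) = f·ψ(g) for all f, g ∈ S and ψ(r) = φ(r) for all r ∈ R. That is, some p^{-1}-linear map on 𝔽₃[X²] does not extend to a p^{-1}-linear map on 𝔽₃[X]. -/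
/-!
Write `t = X ^ 2`, so `R = 𝔽₃[t]`. Since `t ^ 2 = X ^ 3 * X`, any `3⁻¹`-linear extension `ψ` to
`𝔽₃[X]` satisfies `ψ (t ^ 2) = X * ψ X`, so `φ (t ^ 2)` must be divisible by `X`. But `R` is free
over its cubes on `1, t, t ^ 2`, and the projection to the `t ^ 2` coordinate (`topCoord`) is a
`3⁻¹`-linear map sending `t ^ 2` to `1`, which is not divisible by `X`.
-/

open Polynomial

/-- The map `∑ aᵢ Xⁱ ↦ ∑ a₃ₙ₊₂ Xⁿ` on `𝔽₃[X]`: the coordinate at `X ^ 2` with respect to the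
basis `1, X, X ^ 2` over the subring of cubes, followed by the cube root. -/
noncomputable def topCoord (f : Polynomial (ZMod 3)) : Polynomial (ZMod 3) :=
  contract 3 (divX (divX f))

lemma coeff_topCoord (f : Polynomial (ZMod 3)) (n : ℕ) :
    (topCoord f).coeff n = f.coeff (n * 3 + 2) := by
  rw [topCoord, coeff_contract (by norm_num), coeff_divX, coeff_divX]

lemma topCoord_add (f g : Polynomial (ZMod 3)) :
    topCoord (f + g) = topCoord f + topCoord g := by
  ext n
  simp [coeff_topCoord]

lemma X_mul_topCoord (f : Polynomial (ZMod 3)) : X * topCoord f = contract 3 (X * f) := by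
  ext n
  rw [coeff_contract (by norm_num)]
  cases n with
  | zero => simp
  | succ n =>
    rw [coeff_X_mul, coeff_topCoord, show (n + 1) * 3 = n * 3 + 2 + 1 by ring, coeff_X_mul]

lemma topCoord_cube_mul (r f : Polynomial (ZMod 3)) :
    topCoord (r ^ 3 * f) = r * topCoord f := by
  have : Fact (Nat.Prime 3) := ⟨Nat.prime_three⟩
  -- After multiplying by `X`, the map is a plain `contract`, linear over `expand 3 r = r ^ 3`.
  apply mul_left_cancel₀ (X_ne_zero : (X : Polynomial (ZMod 3)) ≠ 0)
  rw [X_mul_topCoord, mul_left_comm X r, X_mul_topCoord, ← ZMod.expand_card r,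
    mul_left_comm X, mul_comm _ (X * f), contract_mul_expand (by norm_num), mul_comm]

lemma topCoord_X_sq : topCoord (X ^ 2) = 1 := by
  ext n
  rw [coeff_topCoord, coeff_X_pow, coeff_one]
  congr 1
  simp

lemma mem_adjoin_X_sq_iff (f : Polynomial (ZMod 3)) :
    f ∈ Algebra.adjoin (ZMod 3) {(X : Polynomial (ZMod 3)) ^ 2} ↔
      ∃ g, expand (ZMod 3) 2 g = f := by
  rw [Algebra.adjoin_singleton_eq_range_aeval, AlgHom.mem_range]
  rfl

/-- Some `p^{-1}`-linear map on `R = 𝔽₃[X²]` does not extend to a `p^{-1}`-linear map on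
`S = 𝔽₃[X]` (here `p = 3`). -/
theorem exists_pe_linear_on_F3Xsq_not_extending_to_F3X :
    ∃ φ : ↥(Algebra.adjoin (ZMod 3) {(X : Polynomial (ZMod 3)) ^ 2}) →
          ↥(Algebra.adjoin (ZMod 3) {(X : Polynomial (ZMod 3)) ^ 2}),
      (∀ a b, φ (a + b) = φ a + φ b) ∧
      (∀ r a, φ (r ^ 3 * a) = r * φ a) ∧
      ¬ ∃ ψ : Polynomial (ZMod 3) → Polynomial (ZMod 3),
          (∀ f g, ψ (f + g) = ψ f + ψ g) ∧
          (∀ f g, ψ (f ^ 3 * g) = f * ψ g) ∧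
          (∀ r : ↥(Algebra.adjoin (ZMod 3) {(X : Polynomial (ZMod 3)) ^ 2}),
            ψ (↑r) = ↑(φ r)) := by
  -- On `R`, `contract 2` is the isomorphism with `𝔽₃[X]` inverse to `expand 2`.
  have hc (g : Polynomial (ZMod 3)) : contract 2 (expand (ZMod 3) 2 g) = g :=
    contract_expand 2 (by norm_num)
  refine ⟨fun r ↦ ⟨expand (ZMod 3) 2 (topCoord (contract 2 r.1)),
    (mem_adjoin_X_sq_iff _).2 ⟨_, rfl⟩⟩, ?_, ?_, ?_⟩
  · rintro ⟨a, ha⟩ ⟨b, hb⟩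
    obtain ⟨a, rfl⟩ := (mem_adjoin_X_sq_iff a).1 ha
    obtain ⟨b, rfl⟩ := (mem_adjoin_X_sq_iff b).1 hb
    apply Subtype.ext
    simp only [AddMemClass.mk_add_mk, ← map_add, hc, topCoord_add]
  · rintro ⟨r, hr⟩ ⟨a, ha⟩
    obtain ⟨r, rfl⟩ := (mem_adjoin_X_sq_iff r).1 hr
    obtain ⟨a, rfl⟩ := (mem_adjoin_X_sq_iff a).1 ha
    apply Subtype.ext
    simp only [SubmonoidClass.mk_pow, MulMemClass.mk_mul_mk, ← map_pow, ← map_mul, hc,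
      topCoord_cube_mul]
  · rintro ⟨ψ, -, hmul, hext⟩
    have hX4 : expand (ZMod 3) 2 (X ^ 2) = X ^ 3 * X := by
      rw [map_pow, expand_X]; ring
    have h := hext ⟨expand (ZMod 3) 2 (X ^ 2), (mem_adjoin_X_sq_iff _).2 ⟨_, rfl⟩⟩
    simp only [hc, topCoord_X_sq, map_one] at h
    rw [hX4, hmul] at h
    simpa using congrArg (coeff · 0) h
end

section
/- Let R = 𝔽₂[x, y, z]/(x²y − z²), which is an integral domain, and let R^N be the integral closure of R in its fraction field. There exists an additive map φ : R → R satisfying φ(r²·a) = r·φ(a) for all r, a ∈ R such that: (a) φ is not surjective; and (b) there exists a surjective additive map ψ : R^N → R^N satisfying ψ(s²·t) = s·ψ(t) for all s, t ∈ R^N and ψ(r) = φ(r) for all r in (the image of) R. In other words, the unique extension of φ to the normalization is surjective although φ itself is not. -/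
/-!
Sending `x ↦ x`, `y ↦ t²`, `z ↦ x t` embeds `R` in `S = 𝔽₂[x, t]`, which is integrally closed,
integral over `R`, and satisfies `x S ⊆ R`; hence `S` is the normalization of `R`, with `x` in the
conductor. The map `ψ` on `S` is the `p⁻¹`-linear projection onto the basis element `t` of `S` over
`S²`: it sends `x^(2i) t^(2j+1)` to `x^i t^j` and kills every other monomial. It is surjective
because `ψ (s² t) = s`. A monomial of `R` is `x^(i+k) t^(2j+k)`, and for `ψ` not to kill it `k` must
be odd and `i + k` even, so `i + k ≥ 2` and its image is divisible by `x`. Therefore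
`ψ R ⊆ x S ⊆ R`, so `ψ` restricts to a map `φ` on `R`, and `φ` misses `1` since `x` is not a unit.

`exists_nonsurjective_of_conductor` is the formal part of this argument. Its hypotheses are supplied
by `toPlane_injective`, `toPlane_isIntegral`, `exists_toPlane_eq_X_mul` (`x S ⊆ R`),
`oddPart_sq_mul`, `oddPart_surjective` and `X_dvd_oddPart_toPlane` (`ψ R ⊆ x S`).
-/

open MvPolynomial

set_option synthInstance.maxHeartbeats 1000000
set_option maxHeartbeats 2000000

/-- The ring `R = 𝔽₂[x,y,z]/(x²y − z²)` (an integral domain). -/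
noncomputable abbrev CuspLikeRing : Type :=
  MvPolynomial (Fin 3) (ZMod 2) ⧸
    Ideal.span {(X 0 : MvPolynomial (Fin 3) (ZMod 2)) ^ 2 * X 1 - X 2 ^ 2}

/-- If `S` is integrally closed, integral over its subring `R`, and `c S ⊆ R` for some `c ≠ 0` in
`R`, then `S` is the integral closure of `R` in its fraction field. -/
lemma exists_algEquiv_integralClosure {R S : Type} [CommRing R] [CommRing S] [IsDomain R]
    [IsDomain S] [IsIntegrallyClosed S] [Algebra R S]
    (hj : Function.Injective (algebraMap R S)) [Algebra.IsIntegral R S]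
    (c : R) (hc : algebraMap R S c ≠ 0)
    (hcs : ∀ s, ∃ r, algebraMap R S r = algebraMap R S c * s) :
    Nonempty (S ≃ₐ[R] integralClosure R (FractionRing R)) := by
  have hinj : Function.Injective (algebraMap R (FractionRing S)) := by
    rw [IsScalarTower.algebraMap_eq R S (FractionRing S)]
    exact (IsFractionRing.injective S (FractionRing S)).comp hj
  have hc' : algebraMap S (FractionRing S) (algebraMap R S c) ≠ 0 := by
    simpa using hc
  have : FaithfulSMul R (FractionRing S) := (faithfulSMul_iff_algebraMap_injective _ _).mpr hinj
  have : IsFractionRing R (FractionRing S) := by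
    refine IsFractionRing.of_field R _ fun q => ?_
    obtain ⟨a, b, hb, rfl⟩ := IsFractionRing.div_surjective (A := S) q
    -- `a / b = (c a) / (c b)`, with numerator and denominator in `R`
    obtain ⟨ra, hra⟩ := hcs a
    obtain ⟨rb, hrb⟩ := hcs b
    refine ⟨ra, rb, ?_⟩
    rw [IsScalarTower.algebraMap_apply R S _ ra, IsScalarTower.algebraMap_apply R S _ rb, hra, hrb,
      map_mul, map_mul, mul_div_mul_left _ _ hc']
  have : IsIntegralClosure S R (FractionRing S) :=
    IsIntegralClosure.of_isIntegrallyClosed S R (FractionRing S)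
  let e₁ : S ≃ₐ[R] integralClosure R (FractionRing S) :=
    IsIntegralClosure.equiv R S (FractionRing S) (integralClosure R (FractionRing S))
  let e₂ : FractionRing S ≃ₐ[R] FractionRing R :=
    (FractionRing.algEquiv R (FractionRing S)).symm
  exact ⟨e₁.trans e₂.mapIntegralClosure⟩

/-- A surjective `p⁻¹`-linear map `Ψ` (for `p = 2`) on the normalization `S` of `R` whose
restriction to `R` takes values in `c S ⊆ R`, with `c` not a unit, restricts to a non-surjective
map on `R`. -/
lemma exists_nonsurjective_of_conductor {R S : Type} [CommRing R] [CommRing S]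
    [IsDomain S] [IsIntegrallyClosed S] (j : R →+* S)
    (hj : Function.Injective j) (hint : j.IsIntegral)
    (c : R) (hc : j c ≠ 0) (hcu : ¬ IsUnit (j c))
    (hcs : ∀ s, ∃ r, j r = j c * s)
    (Ψ : S → S) (hadd : ∀ s t, Ψ (s + t) = Ψ s + Ψ t)
    (hsm : ∀ s t, Ψ (s ^ 2 * t) = s * Ψ t) (hsurj : Function.Surjective Ψ)
    (hR : ∀ r, j c ∣ Ψ (j r)) :
    ∃ φ : R → R,
      (∀ a b, φ (a + b) = φ a + φ b) ∧
      (∀ r a, φ (r ^ 2 * a) = r * φ a) ∧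
      ¬ Function.Surjective φ ∧
      ∃ ψ : ↥(integralClosure R (FractionRing R)) → ↥(integralClosure R (FractionRing R)),
        (∀ s t, ψ (s + t) = ψ s + ψ t) ∧
        (∀ s t, ψ (s ^ 2 * t) = s * ψ t) ∧
        Function.Surjective ψ ∧
        (∀ r : R, ψ (algebraMap R ↥(integralClosure R (FractionRing R)) r)
            = algebraMap R ↥(integralClosure R (FractionRing R)) (φ r)) := by
  have : IsDomain R := hj.isDomain j
  have hex : ∀ r, ∃ r', j r' = Ψ (j r) := fun r => by
    obtain ⟨w, hw⟩ := hR r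
    rw [hw]
    exact hcs w
  choose φ hφ using hex
  let _ := j.toAlgebra
  have : Algebra.IsIntegral R S := ⟨hint⟩
  obtain ⟨e⟩ := exists_algEquiv_integralClosure (R := R) (S := S) hj c hc hcs
  refine ⟨φ, fun a b => hj ?_, fun r a => hj ?_, fun hs => ?_,
    fun s => e (Ψ (e.symm s)), fun s t => ?_, fun s t => ?_, fun s => ?_, fun r => ?_⟩
  · simp only [hφ, map_add, hadd]
  · simp only [hφ, map_mul, map_pow, hsm]
  · obtain ⟨r, hr⟩ := hs 1
    refine hcu (isUnit_of_dvd_one ?_)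
    rw [← map_one j, ← hr, hφ]
    exact hR r
  · simp only [map_add, hadd]
  · simp only [map_mul, map_pow, hsm, AlgEquiv.apply_symm_apply]
  · obtain ⟨t, ht⟩ := hsurj (e.symm s)
    exact ⟨e t, by simp [ht]⟩
  · dsimp only
    rw [e.symm.commutes, ← e.commutes (φ r)]
    exact congrArg e (hφ r).symm

/-- The polynomial ring `S = 𝔽₂[x, t]`, with `x = X 0` and `t = X 1`. -/
noncomputable abbrev PlaneRing : Type := MvPolynomial (Fin 2) (ZMod 2)

/-- The homomorphism `R → S` given by `x ↦ x`, `y ↦ t²`, `z ↦ x t`. -/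
noncomputable def toPlane : CuspLikeRing →+* PlaneRing :=
  Ideal.Quotient.lift _
    (aeval ![(X 0 : PlaneRing), X 1 ^ 2, X 0 * X 1] :
      MvPolynomial (Fin 3) (ZMod 2) →ₐ[ZMod 2] PlaneRing).toRingHom (by
    intro a ha
    obtain ⟨b, rfl⟩ := Ideal.mem_span_singleton.mp ha
    have : (aeval ![(X 0 : PlaneRing), X 1 ^ 2, X 0 * X 1])
        ((X 0 : MvPolynomial (Fin 3) (ZMod 2)) ^ 2 * X 1 - X 2 ^ 2) = 0 := by
      simp; ring
    rw [AlgHom.toRingHom_eq_coe, RingHom.coe_coe, map_mul, this, zero_mul])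

/-- The quotient map `𝔽₂[x, y, z] → R`. -/
noncomputable abbrev cuspMk : MvPolynomial (Fin 3) (ZMod 2) →+* CuspLikeRing :=
  Ideal.Quotient.mk _

lemma toPlane_mk (p : MvPolynomial (Fin 3) (ZMod 2)) :
    toPlane (cuspMk p) = aeval ![(X 0 : PlaneRing), X 1 ^ 2, X 0 * X 1] p := rfl

/-- The substitution `f(x, t) ↦ f(x, t²)` on `𝔽₂[x, t]`. -/
noncomputable def squareSnd : PlaneRing →ₐ[ZMod 2] PlaneRing :=
  aeval ![(X 0 : PlaneRing), X 1 ^ 2]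

lemma squareSnd_injective : Function.Injective squareSnd := by
  rw [injective_iff_map_eq_zero]
  intro a ha
  -- substituting `x²` for `x` afterwards gives `a(x², t²) = a(x, t)²`
  have key : (aeval ![(X 0 : PlaneRing) ^ 2, X 1] : PlaneRing →ₐ[ZMod 2] PlaneRing).comp squareSnd
      = expand 2 := by
    ext i
    fin_cases i <;> simp [squareSnd]
  have h := DFunLike.congr_fun key a
  rw [AlgHom.comp_apply, ha, map_zero, expand_zmod] at h
  exact pow_eq_zero_iff (two_ne_zero) |>.mp h.symm

lemma pderiv_squareSnd (a : PlaneRing) : pderiv 1 (squareSnd a) = 0 := by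
  induction a using MvPolynomial.induction_on with
  | C c => simp [squareSnd]
  | add p q hp hq => simp [hp, hq]
  | mul_X p i hp =>
    rw [map_mul, Derivation.leibniz, hp]
    have h2 : (2 : PlaneRing) = 0 := CharTwo.two_eq_zero
    fin_cases i
    · simp [squareSnd]
    · simp [squareSnd, Derivation.leibniz_pow, h2]

/-- As a module over `𝔽₂[x, y]`, the ring `R` is generated by `1` and `z`. -/
lemma exists_normal_form (p : MvPolynomial (Fin 3) (ZMod 2)) : ∃ a b : PlaneRing,
    cuspMk p = cuspMk (rename Fin.castSucc a) + cuspMk (rename Fin.castSucc b) * cuspMk (X 2) := by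
  induction p using MvPolynomial.induction_on with
  | C c => exact ⟨C c, 0, by simp⟩
  | add p q hp hq =>
    obtain ⟨a, b, h⟩ := hp
    obtain ⟨a', b', h'⟩ := hq
    exact ⟨a + a', b + b', by simp only [map_add, h, h']; ring⟩
  | mul_X p i hp =>
    obtain ⟨a, b, h⟩ := hp
    have hrel : cuspMk (X 0) ^ 2 * cuspMk (X 1) = cuspMk (X 2) ^ 2 := by
      rw [← map_pow, ← map_mul, ← map_pow]
      exact Ideal.Quotient.eq.mpr (Ideal.mem_span_singleton_self _)
    have e0 : rename Fin.castSucc (X 0 : PlaneRing) = X 0 := by simp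
    have e1 : rename Fin.castSucc (X 1 : PlaneRing) = X 1 := by simp
    fin_cases i
    · exact ⟨a * X 0, b * X 0, by simp only [map_mul, h, e0]; simp; ring⟩
    · exact ⟨a * X 1, b * X 1, by simp only [map_mul, h, e1]; simp; ring⟩
    · refine ⟨b * X 0 ^ 2 * X 1, a, ?_⟩
      simp only [map_mul, map_pow, h, e0, e1]
      simp only [Fin.reduceFinMk]
      linear_combination (-cuspMk (rename Fin.castSucc b)) * hrel

/-- The relation `x² y = z²` generates all relations between `x`, `t²` and `x t`: an element
`a(x, y) + b(x, y) z` of `R` has image `a(x, t²) + b(x, t²) x t`, which determines `a` and `b`. -/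
lemma toPlane_injective : Function.Injective toPlane := by
  rw [injective_iff_map_eq_zero]
  intro r hr
  obtain ⟨p, rfl⟩ := Ideal.Quotient.mk_surjective r
  obtain ⟨a, b, h⟩ := exists_normal_form p
  have hE : ∀ a : PlaneRing, toPlane (cuspMk (rename Fin.castSucc a)) = squareSnd a := by
    intro a
    rw [toPlane_mk, aeval_rename, squareSnd]
    congr 2
    ext i
    fin_cases i <;> rfl
  change toPlane (cuspMk p) = 0 at hr
  change cuspMk p = 0
  rw [h, map_add, map_mul, hE, hE, toPlane_mk, aeval_X] at hr
  -- differentiating `a(x, t²) + b(x, t²) x t = 0` in `t` isolates `b`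
  have hd := congrArg (pderiv (1 : Fin 2)) hr
  simp [Derivation.leibniz, pderiv_squareSnd] at hd
  have hb : b = 0 := squareSnd_injective (by rw [hd, map_zero])
  subst hb
  have ha : a = 0 := squareSnd_injective (by simpa using hr)
  subst ha
  rw [h]; simp

lemma toPlane_isIntegral : toPlane.IsIntegral := by
  intro s
  have hx : toPlane.IsIntegralElem (X 0) := by
    have := toPlane.isIntegralElem_map (x := cuspMk (X 0))
    simpa [toPlane_mk] using this
  have ht : toPlane.IsIntegralElem (X 1) := by
    have h := toPlane.isIntegralElem_map (x := cuspMk (X 1))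
    rw [toPlane_mk, aeval_X] at h
    let _ := toPlane.toAlgebra
    exact IsIntegral.of_pow (R := CuspLikeRing) (n := 2) (by norm_num) h
  induction s using MvPolynomial.induction_on with
  | C c =>
    have := toPlane.isIntegralElem_map (x := cuspMk (C c))
    simpa [toPlane_mk] using this
  | add p q hp hq => exact hp.add _ hq
  | mul_X p i hp =>
    fin_cases i
    · exact hp.mul _ hx
    · exact hp.mul _ ht

/-- The ideal `x S` is contained in `R`. -/
lemma exists_toPlane_eq_X_mul (s : PlaneRing) :
    ∃ r, toPlane r = toPlane (cuspMk (X 0)) * s := by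
  induction s using MvPolynomial.induction_on' with
  | monomial m c =>
    rw [monomial_eq, Finsupp.prod_fintype _ _ (by simp), Fin.prod_univ_two]
    obtain ⟨k, hk | hk⟩ := Nat.even_or_odd' (m 1)
    · refine ⟨cuspMk (C c * X 0 ^ (m 0 + 1) * X 1 ^ k), ?_⟩
      simp [toPlane_mk, hk]
      ring
    · refine ⟨cuspMk (C c * X 0 ^ (m 0) * X 1 ^ k * X 2), ?_⟩
      simp [toPlane_mk, hk]
      ring
  | add p q hp hq =>
    obtain ⟨a, ha⟩ := hp
    obtain ⟨b, hb⟩ := hq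
    exact ⟨a + b, by rw [map_add, ha, hb, mul_add]⟩

/-- The injection `n ↦ 2 n + (0, 1)` on exponents. -/
noncomputable def oddExponent (n : Fin 2 →₀ ℕ) : Fin 2 →₀ ℕ := 2 • n + Finsupp.single 1 1

lemma oddExponent_injective : Function.Injective oddExponent := by
  intro m n h
  ext i
  have := DFunLike.congr_fun h i
  simp [oddExponent] at this
  exact this

/-- The `p⁻¹`-linear map on `𝔽₂[x, t]` with `x^(2i) t^(2j+1) ↦ x^i t^j`, zero on all other
monomials: the coefficient of `oddPart f` at the exponent `n` is that of `f` at `2 n + (0, 1)`. -/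
noncomputable def oddPart (f : PlaneRing) : PlaneRing :=
  AddMonoidAlgebra.comapDomain oddExponent oddExponent_injective f

lemma coeff_oddPart (f : PlaneRing) (n : Fin 2 →₀ ℕ) :
    coeff n (oddPart f) = coeff (oddExponent n) f := rfl

lemma oddPart_add (f g : PlaneRing) : oddPart (f + g) = oddPart f + oddPart g := by
  ext n
  simp [coeff_oddPart]

lemma oddPart_sq_mul (s t : PlaneRing) : oddPart (s ^ 2 * t) = s * oddPart t := by
  induction s using MvPolynomial.induction_on' with
  | monomial m c =>
    have hc : c ^ 2 = c := ZMod.pow_card c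
    ext n
    rw [coeff_oddPart, monomial_pow, hc, coeff_monomial_mul', coeff_monomial_mul', coeff_oddPart]
    have hle : 2 • m ≤ oddExponent n ↔ m ≤ n := by
      simp only [Finsupp.le_def, Fin.forall_fin_two, oddExponent]
      simp
      omega
    simp only [hle]
    split_ifs with h
    · congr 2
      ext i
      have := h i
      simp [oddExponent]
      omega
    · rfl
  | add p q hp hq => rw [add_pow_char, add_mul, oddPart_add, hp, hq, add_mul]

lemma oddPart_surjective : Function.Surjective oddPart := by
  intro s
  refine ⟨s ^ 2 * X 1, ?_⟩
  have h1 : oddPart (X 1) = 1 := by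
    ext n
    rw [coeff_oddPart, coeff_X, coeff_one]
    refine if_congr ?_ rfl rfl
    simp [oddExponent, eq_comm]
  rw [oddPart_sq_mul, h1, mul_one]

/-- The map `oddPart` sends `R` into `x S`. -/
lemma X_dvd_oddPart_toPlane (p : MvPolynomial (Fin 3) (ZMod 2)) :
    X 0 ∣ oddPart (toPlane (cuspMk p)) := by
  induction p using MvPolynomial.induction_on' with
  | monomial m c =>
    rw [X_dvd_iff_modMonomial_eq_zero]
    ext n
    by_cases hn : Finsupp.single 0 1 ≤ n
    · rw [coeff_modMonomial_of_le _ hn, coeff_zero]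
    rw [coeff_modMonomial_of_not_le _ hn, coeff_zero, coeff_oddPart]
    have hn0 : n 0 = 0 := by simpa [Nat.one_le_iff_ne_zero] using hn
    have himg : toPlane (cuspMk (monomial m c)) = monomial
        (Finsupp.single 0 (m 0 + m 2) + Finsupp.single 1 (2 * m 1 + m 2)) c := by
      rw [toPlane_mk, aeval_monomial, Finsupp.prod_fintype _ _ (by simp), Fin.prod_univ_three,
        monomial_eq, Finsupp.prod_fintype _ _ (by simp), Fin.prod_univ_two]
      simp only [algebraMap_eq, Matrix.cons_val, Finsupp.add_apply, Finsupp.single_apply]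
      simp only [reduceIte, one_ne_zero, zero_ne_one, add_zero, zero_add]
      ring
    rw [himg, coeff_monomial, if_neg]
    intro h
    have h0 := DFunLike.congr_fun h 0
    have h1 := DFunLike.congr_fun h 1
    simp [oddExponent] at h0 h1
    omega
  | add p q hp hq =>
    rw [map_add, map_add, oddPart_add]
    exact dvd_add hp hq

/-- On `R = 𝔽₂[x,y,z]/(x²y − z²)` there exists a non-surjective `p^{-1}`-linear map whose
(unique) `p^{-1}`-linear extension to the normalization `R^N` (the integral closure of `R`
in its fraction field) is surjective (here `p = 2`). -/
theorem F2_xxy_zz_nonsurjective_map_with_surjective_extension :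
    ∃ φ : CuspLikeRing → CuspLikeRing,
      (∀ a b, φ (a + b) = φ a + φ b) ∧
      (∀ r a, φ (r ^ 2 * a) = r * φ a) ∧
      ¬ Function.Surjective φ ∧
      ∃ ψ : ↥(integralClosure CuspLikeRing (FractionRing CuspLikeRing)) →
            ↥(integralClosure CuspLikeRing (FractionRing CuspLikeRing)),
        (∀ s t, ψ (s + t) = ψ s + ψ t) ∧
        (∀ s t, ψ (s ^ 2 * t) = s * ψ t) ∧
        Function.Surjective ψ ∧
        (∀ r : CuspLikeRing,
          ψ (algebraMap CuspLikeRing ↥(integralClosure CuspLikeRing (FractionRing CuspLikeRing)) r)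
            = algebraMap CuspLikeRing
                ↥(integralClosure CuspLikeRing (FractionRing CuspLikeRing)) (φ r)) := by
  have hX : toPlane (cuspMk (X 0)) = X 0 := by rw [toPlane_mk, aeval_X]; rfl
  refine exists_nonsurjective_of_conductor toPlane toPlane_injective toPlane_isIntegral
    (cuspMk (X 0)) ?_ ?_ exists_toPlane_eq_X_mul oddPart oddPart_add oddPart_sq_mul
    oddPart_surjective fun r => ?_
  · rw [hX]; exact X_ne_zero 0
  · rw [hX]; exact (X_prime (i := (0 : Fin 2))).not_isUnit
  · obtain ⟨p, rfl⟩ := Ideal.Quotient.mk_surjective r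
    rw [hX]
    exact X_dvd_oddPart_toPlane p
end

section
/- Let K ⊆ L be a finite separable extension of fields of prime characteristic p, let e ≥ 1, let φ : K → K be an additive map with φ(a^{p^e}·x) = a·φ(x) for all a, x ∈ K, and let ψ : L → L be an additive map with ψ(b^{p^e}·y) = b·ψ(y) for all b, y ∈ L, such that ψ(x) = φ(x) for every x ∈ K. Then the field trace Tr_{L/K} : L → K intertwines the two maps: Tr_{L/K}(ψ(y)) = φ(Tr_{L/K}(y)) for all y ∈ L. -/
/-!
Write `q = p ^ e`. Because `L/K` is separable, the `q`-th powers of elements of `L` span `L` over `K`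
(`Field.span_map_pow_expChar_pow_eq_top_of_isSeparable`), so by additivity it is enough to treat
`y = c * b ^ q` with `c ∈ K` and `b ∈ L`. The trace is the sum of the conjugates, hence commutes with
the Frobenius (`trace_pow_char_pow`), and both sides equal `φ c * Tr b`:
`Tr (ψ (c * b ^ q)) = Tr (b * φ c)` and `φ (Tr (c * b ^ q)) = φ (c * (Tr b) ^ q)`.
-/

/-- The trace of a finite separable extension in characteristic `p` commutes with the iterated
Frobenius: over an algebraic closure it is the sum of the embeddings, and `x ↦ x ^ p ^ e` is
additive there. -/
theorem trace_pow_char_pow {K L : Type*} [Field K] [Field L] [Algebra K L]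
    [FiniteDimensional K L] [Algebra.IsSeparable K L]
    (p : ℕ) [Fact p.Prime] [CharP K p] (e : ℕ) (b : L) :
    Algebra.trace K L (b ^ p ^ e) = Algebra.trace K L b ^ p ^ e := by
  have : CharP (AlgebraicClosure K) p :=
    charP_of_injective_algebraMap (algebraMap K (AlgebraicClosure K)).injective p
  apply (algebraMap K (AlgebraicClosure K)).injective
  rw [map_pow (algebraMap K (AlgebraicClosure K)), trace_eq_sum_embeddings (AlgebraicClosure K),
    trace_eq_sum_embeddings (AlgebraicClosure K), sum_pow_char_pow]
  simp only [map_pow]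


/-- For a finite separable extension `L/K` of fields of characteristic `p`, the field trace
`Tr_{L/K}` intertwines a `p^{-e}`-linear map `ψ` on `L` extending a `p^{-e}`-linear map `φ`
on `K`:  `Tr_{L/K}(ψ(y)) = φ(Tr_{L/K}(y))`. -/
theorem trace_intertwines_pe_linear_maps
    {K L : Type*} [Field K] [Field L] [Algebra K L]
    [FiniteDimensional K L] [Algebra.IsSeparable K L]
    (p : ℕ) (hp : p.Prime) [CharP K p]
    (e : ℕ) (he : 1 ≤ e)
    (φ : K → K)
    (hφadd : ∀ a b : K, φ (a + b) = φ a + φ b)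
    (hφlin : ∀ a x : K, φ (a ^ p ^ e * x) = a * φ x)
    (ψ : L → L)
    (hψadd : ∀ a b : L, ψ (a + b) = ψ a + ψ b)
    (hψlin : ∀ b y : L, ψ (b ^ p ^ e * y) = b * ψ y)
    (hext : ∀ x : K, ψ (algebraMap K L x) = algebraMap K L (φ x)) :
    ∀ y : L, Algebra.trace K L (ψ y) = φ (Algebra.trace K L y) := by
  have : Fact p.Prime := ⟨hp⟩
  have : ExpChar K p := ExpChar.prime hp
  have hφ0 : φ 0 = 0 := by simpa using hφadd 0 0
  have hψ0 : ψ 0 = 0 := by simpa using hψadd 0 0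
  have hspan : Submodule.span K (Set.range fun b : L ↦ b ^ p ^ e) = ⊤ :=
    Field.span_map_pow_expChar_pow_eq_top_of_isSeparable (v := (id : L → L)) p e
      (by rw [Set.range_id, Submodule.span_univ])
  -- The scalar `c` makes the claim stable under `K`-multiples, although `φ` and `ψ` are not
  -- `K`-linear.
  have key : ∀ y ∈ Submodule.span K (Set.range fun b : L ↦ b ^ p ^ e),
      ∀ c : K, Algebra.trace K L (ψ (c • y)) = φ (Algebra.trace K L (c • y)) := by
    intro y hy
    induction hy using Submodule.span_induction with
    | mem x hx =>
      obtain ⟨b, rfl⟩ := hx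
      intro c
      have h₁ : ψ (c • b ^ p ^ e) = φ c • b := by
        rw [Algebra.smul_def, mul_comm, hψlin, hext, Algebra.smul_def, mul_comm]
      simp only [h₁]
      rw [map_smul, map_smul, trace_pow_char_pow p e, smul_eq_mul, smul_eq_mul,
        mul_comm c, hφlin, mul_comm]
    | zero => intro c; simp [hφ0, hψ0]
    | add x y _ _ hx hy =>
      intro c
      rw [smul_add, hψadd, map_add, map_add, hφadd, hx, hy]
    | smul a x _ hx => intro c; rw [smul_smul]; exact hx _
  intro y
  simpa using key y (hspan ▸ Submodule.mem_top) 1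
end
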